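/- arXiv:2205.00059 — 4 statements merged into one kernel-verified Lean document; each statement's English description precedes it below -/
import Mathlib

section
/- Let λ > 0 and β ∈ (0,1]. For all n, k ∈ ℕ₀, ∫_ℝ (d^k/dx^k C_n^{λ,β})(x) dπ_{λ,β}(x) equals k! s(n,k) if k ≤ n, and equals 0 if k > n, where s(n,k) are the Stirling numbers of the first kind and d^k/dx^k denotes the k-th derivative of the polynomial C_n^{λ,β}. -/
open MeasureTheory Finset
open scoped ENNReal NNReal

noncomputable section

/-- The complex Mittag-Leffler function `E_β(z) = ∑ zⁿ / Γ(βn+1)`. -/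
def mittagLeffler (β : ℝ) (z : ℂ) : ℂ :=
  ∑' n : ℕ, z ^ n / (Complex.Gamma ((β * n + 1 : ℝ) : ℂ))

/-- The real Mittag-Leffler function `E_β(x) = ∑ xⁿ / Γ(βn+1)`. -/
def mittagLefflerR (β : ℝ) (x : ℝ) : ℝ :=
  ∑' n : ℕ, x ^ n / Real.Gamma (β * n + 1)

/-- The fractional Poisson measure `π_{λ,β} = ∑_k (λᵏ/k!) E_β⁽ᵏ⁾(-λ) δ_k` on `ℝ`. -/
def fracPoisson (lam β : ℝ) : Measure ℝ :=
  Measure.sum fun k : ℕ =>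
    ENNReal.ofReal (lam ^ k / k.factorial * iteratedDeriv k (mittagLefflerR β) (-lam)) •
      Measure.dirac (k : ℝ)

/-- The Poisson measure with rate `μ` on `ℝ`, `π_μ({k}) = (μᵏ/k!) e^{-μ}`. -/
def poissonMeasureR (μ : ℝ) : Measure ℝ :=
  Measure.sum fun k : ℕ =>
    ENNReal.ofReal (μ ^ k / k.factorial * Real.exp (-μ)) • Measure.dirac (k : ℝ)

/-- The generalized Appell polynomials
`C_n^{λ,β}(x) = dⁿ/dzⁿ [e^{x log(1+z)} / E_β(λz)]` at `z = 0`. -/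
def genAppell (lam β : ℝ) (n : ℕ) (x : ℂ) : ℂ :=
  iteratedDeriv n
    (fun z : ℂ => Complex.exp (x * Complex.log (1 + z)) / mittagLeffler β (lam * z)) 0

/-- The Appell polynomials `A_n^{λ,β}(x) = dⁿ/dzⁿ [e^{zx} / E_β(λ(eᶻ-1))]` at `z = 0`. -/
def appell (lam β : ℝ) (n : ℕ) (x : ℂ) : ℂ :=
  iteratedDeriv n
    (fun z : ℂ => Complex.exp (z * x) / mittagLeffler β (lam * (Complex.exp z - 1))) 0

/-- Stirling numbers of the first kind, via `(log(1+z))^k = k! ∑_{n≥k} s(n,k) zⁿ/n!`. -/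
def stirlingFst (n k : ℕ) : ℝ :=
  iteratedDeriv n (fun x : ℝ => (Real.log (1 + x)) ^ k) 0 / k.factorial

/-- Stirling numbers of the second kind, via `(eᶻ-1)^k = k! ∑_{n≥k} S(n,k) zⁿ/n!`. -/
def stirlingSnd (n k : ℕ) : ℝ :=
  iteratedDeriv n (fun x : ℝ => (Real.exp x - 1) ^ k) 0 / k.factorial

/-- The `n`-th moment of the fractional Poisson measure. -/
def fpMoment (lam β : ℝ) (n : ℕ) : ℝ := ∫ x, x ^ n ∂(fracPoisson lam β)

/-- `M̃_{λ,β}(m) = m! λᵐ / Γ(mβ+1)`. -/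
def tildeM (lam β : ℝ) (m : ℕ) : ℝ := m.factorial * lam ^ m / Real.Gamma (m * β + 1)

/-- The (partial exponential) Bell polynomials `B_{n,k}(x₁, …, x_{n-k+1})`. -/
def bellPoly (n k : ℕ) (x : ℕ → ℂ) : ℂ :=
  ∑ j ∈ (Fintype.piFinset fun _ : Fin (n - k + 1) => Finset.range (n + 1)).filter
      (fun j => (∑ i, j i) = k ∧ (∑ i, (i.1 + 1) * j i) = n),
    (n.factorial : ℂ) / (∏ i, ((j i).factorial : ℂ)) *
      ∏ i, (x (i.1 + 1) / ((i.1 + 1).factorial : ℂ)) ^ j i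

/-!
Integrating `(1 + z) ^ x` against `π_{λ,β}` gives the Taylor series of `E_β` about `-λ` at `λz`,
that is `E_β(λz)`. Since `d^k/dx^k` brings down a factor `log(1 + z) ^ k` in the generating function
of the `C_n`, integration cancels the denominator `E_β(λz)` and leaves `log(1 + z) ^ k`.

That the masses `λ^k E_β⁽ᵏ⁾(-λ) / k!` are nonnegative is Pollard's theorem: `E_β(-x)` is completely
monotone. For `0 < β ≤ 1` the power series `(1 - X) ^ β + x` has nonpositive coefficients apart from
its positive constant term, so dividing by it preserves nonnegativity of coefficients. Hence
`x ^ k (1 - X) ^ (β - 1) / ((1 - X) ^ β + x) ^ (k + 1)` has nonnegative coefficients, and the `n`-th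
one, at `x = λ n ^ (-β)`, tends to the mass at `k` as `n → ∞`.
-/

open Filter PowerSeries
open scoped Topology PowerSeries.WithPiTopology

section Multichoose

lemma multichoose_eq_prod (a : ℝ) (n : ℕ) :
    Ring.multichoose a n = ∏ i ∈ range n, (a + i) / (i + 1) := by
  have hasc : (ascPochhammer ℝ n).eval a = ∏ i ∈ range n, (a + i) := by
    induction n with
    | zero => simp
    | succ n ih => rw [ascPochhammer_succ_eval, prod_range_succ, ih]
  have hfac : ∏ i ∈ range n, ((i : ℝ) + 1) = n.factorial := by
    exact_mod_cast prod_range_add_one_eq_factorial n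
  have h := Ring.factorial_nsmul_multichoose_eq_ascPochhammer a n
  rw [Polynomial.ascPochhammer_smeval_eq_eval, hasc, nsmul_eq_mul] at h
  rw [prod_div_distrib, hfac, ← h]
  field_simp

lemma multichoose_succ (a : ℝ) (n : ℕ) :
    Ring.multichoose a (n + 1) = Ring.multichoose a n * ((a + n) / (n + 1)) := by
  simp only [multichoose_eq_prod, prod_range_succ]

lemma multichoose_nonneg {a : ℝ} (ha : 0 ≤ a) (n : ℕ) : 0 ≤ Ring.multichoose a n := by
  rw [multichoose_eq_prod]
  positivity

lemma multichoose_neg_nonpos {b : ℝ} (hb0 : 0 ≤ b) (hb1 : b ≤ 1) {n : ℕ} (hn : n ≠ 0) :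
    Ring.multichoose (-b) n ≤ 0 := by
  obtain ⟨n, rfl⟩ := Nat.exists_eq_succ_of_ne_zero hn
  rw [multichoose_eq_prod, prod_range_succ']
  refine mul_nonpos_of_nonneg_of_nonpos (prod_nonneg fun i _ => ?_) (by simpa using hb0)
  have : (0 : ℝ) ≤ -b + (i + 1 : ℕ) := by push_cast; linarith [i.cast_nonneg (α := ℝ)]
  positivity

lemma multichoose_le_pow {a : ℝ} (ha : 1 ≤ a) (n : ℕ) : Ring.multichoose a n ≤ a ^ n := by
  rw [multichoose_eq_prod, ← card_range n, ← prod_const, card_range]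
  refine prod_le_prod (fun i _ => by positivity) fun i _ => ?_
  rw [div_le_iff₀ (by positivity)]
  nlinarith [i.cast_nonneg (α := ℝ)]

lemma tendsto_multichoose_mul_rpow {y : ℝ} (hy : 0 ≤ y) :
    Tendsto (fun n : ℕ => Ring.multichoose (1 + y) n * (n : ℝ) ^ (-y)) atTop
      (𝓝 (Real.Gamma (y + 1))⁻¹) := by
  have hΓ : Real.Gamma (y + 1) ≠ 0 := (Real.Gamma_pos_of_pos (by linarith)).ne'
  have hEuler := (tendsto_natCast_div_add_atTop (y + 1)).mul
    ((Real.GammaSeq_tendsto_Gamma (y + 1)).inv₀ hΓ)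
  rw [one_mul] at hEuler
  refine hEuler.congr' ?_
  filter_upwards [eventually_gt_atTop 0] with n hn
  have hn' : (0 : ℝ) < n := by exact_mod_cast hn
  have hprod : ∏ j ∈ range n, (y + 1 + (j : ℝ)) ≠ 0 := by positivity
  have hfac : ∏ i ∈ range n, ((i : ℝ) + 1) = n.factorial := by
    exact_mod_cast prod_range_add_one_eq_factorial n
  rw [Real.GammaSeq, multichoose_eq_prod, prod_div_distrib, hfac, prod_range_succ,
    Real.rpow_neg hn'.le, Real.rpow_add_one hn'.ne', add_comm 1 y]
  field_simp
  ring

lemma one_add_div_mul_rpow_neg_le {y t : ℝ} (hy : 0 ≤ y) (ht : 0 < t) :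
    (1 + y / (t + 1)) * (t + 1) ^ (-y) ≤ t ^ (-y) := by
  have hexp : 1 + y / (t + 1) ≤ Real.exp (y / (t + 1)) := by
    linarith [Real.add_one_le_exp (y / (t + 1))]
  have hlog : Real.log t - Real.log (t + 1) ≤ -(1 / (t + 1)) := by
    rw [← Real.log_div (by positivity) (by positivity)]
    refine (Real.log_le_sub_one_of_pos (by positivity)).trans_eq ?_
    field_simp
    ring
  rw [Real.rpow_def_of_pos (by positivity), Real.rpow_def_of_pos ht]
  calc _ ≤ Real.exp (y / (t + 1)) * Real.exp (Real.log (t + 1) * -y) := by gcongr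
    _ = Real.exp (y * (1 / (t + 1) - Real.log (t + 1))) := by rw [← Real.exp_add]; ring_nf
    _ ≤ Real.exp (y * -Real.log t) := by gcongr; linarith
    _ = _ := by ring_nf

lemma antitoneOn_multichoose_mul_rpow {y : ℝ} (hy : 0 ≤ y) :
    AntitoneOn (fun n : ℕ => Ring.multichoose (1 + y) n * (n : ℝ) ^ (-y)) (Set.Ici 1) := by
  refine antitoneOn_of_succ_le Set.ordConnected_Ici fun n _ hn _ => ?_
  have hn0 : (0 : ℝ) < n := by exact_mod_cast Set.mem_Ici.1 hn
  have hratio : (1 + y + n) / (n + 1) = 1 + y / (n + 1) := by field_simp; ring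
  simp only [Nat.succ_eq_succ, Nat.succ_eq_add_one, multichoose_succ, hratio, mul_assoc,
    Nat.cast_add, Nat.cast_one]
  exact mul_le_mul_of_nonneg_left (one_add_div_mul_rpow_neg_le hy hn0)
    (multichoose_nonneg (by linarith) n)

lemma inv_Gamma_add_one_le {y : ℝ} (hy : 0 ≤ y) {n : ℕ} (hn : 1 ≤ n) :
    (Real.Gamma (y + 1))⁻¹ ≤ Ring.multichoose (1 + y) n * (n : ℝ) ^ (-y) := by
  refine le_of_tendsto (tendsto_multichoose_mul_rpow hy) ?_
  filter_upwards [eventually_ge_atTop n] with m hm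
  exact antitoneOn_multichoose_mul_rpow hy hn (hn.trans hm : 1 ≤ m) hm

end Multichoose

section PowerSeriesPositivity

/-- The power series `(1 - X) ^ (-a)` for a real exponent. -/
def invOneSubRPow (a : ℝ) : ℝ⟦X⟧ := rescale (-1) (binomialSeries ℝ (-a))

lemma coeff_invOneSubRPow (a : ℝ) (n : ℕ) :
    coeff n (invOneSubRPow a) = Ring.multichoose a n := by
  rw [invOneSubRPow, coeff_rescale, binomialSeries_coeff, Ring.choose_neg, ← Ring.multichoose_eq,
    smul_eq_mul, mul_one, Int.negOnePow_def, Units.smul_def]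
  simp [← mul_assoc, ← mul_pow]

lemma invOneSubRPow_add (a b : ℝ) :
    invOneSubRPow (a + b) = invOneSubRPow a * invOneSubRPow b := by
  rw [invOneSubRPow, neg_add, binomialSeries_add, map_mul, invOneSubRPow, invOneSubRPow]

lemma coeff_nonneg_of_mul {A F : ℝ⟦X⟧} (hA0 : 0 < coeff 0 A)
    (hA : ∀ n ≠ 0, coeff n A ≤ 0) (hAF : ∀ n, 0 ≤ coeff n (A * F)) (n : ℕ) : 0 ≤ coeff n F := by
  induction n using Nat.strong_induction_on with
  | _ n ih =>
    have h := hAF n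
    rw [coeff_mul, ← add_sum_erase _ _
      (mem_antidiagonal.2 (zero_add n) : (0, n) ∈ antidiagonal n)] at h
    have hrest : ∑ p ∈ (antidiagonal n).erase (0, n), coeff p.1 A * coeff p.2 F ≤ 0 := by
      refine sum_nonpos fun p hp => ?_
      obtain ⟨hne, hp⟩ := mem_erase.1 hp
      have hp' := mem_antidiagonal.1 hp
      have hp1 : p.1 ≠ 0 := fun h0 => hne (Prod.ext h0 (by simpa [h0] using hp'))
      exact mul_nonpos_of_nonpos_of_nonneg (hA _ hp1) (ih _ (by omega))
    exact nonneg_of_mul_nonneg_right (by linarith) hA0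

end PowerSeriesPositivity

section TaylorWeight

/-- The coefficient of `a m` in `x ^ k / k! * f⁽ᵏ⁾(-x)`, where `f y = ∑' m, a m * y ^ m`. -/
def taylorWeight (k : ℕ) (x : ℝ) (m : ℕ) : ℝ := (-1) ^ k * m.choose k * (-x) ^ m

lemma taylorWeight_mul (k : ℕ) (x c : ℝ) (m : ℕ) :
    taylorWeight k (x * c) m = taylorWeight k x m * c ^ m := by
  rw [taylorWeight, taylorWeight, ← neg_mul, mul_pow]
  ring

lemma taylorWeight_zero_succ (x : ℝ) (m : ℕ) :
    taylorWeight 0 x (m + 1) = -x * taylorWeight 0 x m := by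
  simp only [taylorWeight, Nat.choose_zero_right]
  ring

lemma taylorWeight_succ_succ (k : ℕ) (x : ℝ) (m : ℕ) :
    taylorWeight (k + 1) x (m + 1) = x * (taylorWeight k x m - taylorWeight (k + 1) x m) := by
  simp only [taylorWeight, Nat.choose_succ_succ, Nat.cast_add]
  ring

lemma abs_taylorWeight (k : ℕ) (x : ℝ) (m : ℕ) :
    |taylorWeight k x m| = m.choose k * |x| ^ m := by
  simp [taylorWeight, abs_mul, abs_pow]

lemma summable_succ_pow_mul_geometric (d : ℕ) {r : ℝ} (hr0 : 0 ≤ r) (hr1 : r < 1) :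
    Summable fun m : ℕ => ((m : ℝ) + 1) ^ d * r ^ m := by
  refine Summable.of_nonneg_of_le (fun m => by positivity) (fun m => ?_)
    (summable_descFactorial_mul_geometric_of_norm_lt_one d (r := r)
      (by rwa [Real.norm_of_nonneg hr0]))
  gcongr
  have h := Nat.pow_sub_le_descFactorial (m + d) d
  rw [show m + d + 1 - d = m + 1 by omega] at h
  exact_mod_cast h

lemma summable_abs_taylorWeight_mul_multichoose {β x : ℝ} (hβ : 0 ≤ β) (hx : |x| < 1)
    (k n : ℕ) :
    Summable fun m : ℕ => |taylorWeight k x m| * Ring.multichoose (1 + β * m) n := by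
  refine Summable.of_nonneg_of_le
    (fun m => mul_nonneg (abs_nonneg _) (multichoose_nonneg (by positivity) n)) (fun m => ?_)
    ((summable_succ_pow_mul_geometric (k + n) (abs_nonneg x) hx).mul_left ((1 + β) ^ n))
  have hchoose : (m.choose k : ℝ) ≤ ((m : ℝ) + 1) ^ k :=
    calc (m.choose k : ℝ) ≤ (m : ℝ) ^ k := by exact_mod_cast Nat.choose_le_pow m k
      _ ≤ _ := by gcongr; linarith
  have hmultichoose : Ring.multichoose (1 + β * m) n ≤ ((1 + β) * ((m : ℝ) + 1)) ^ n := by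
    refine (multichoose_le_pow (by linarith [show 0 ≤ β * m by positivity]) n).trans ?_
    gcongr
    nlinarith [m.cast_nonneg (α := ℝ)]
  calc |taylorWeight k x m| * Ring.multichoose (1 + β * m) n
      ≤ ((m : ℝ) + 1) ^ k * |x| ^ m * ((1 + β) * ((m : ℝ) + 1)) ^ n := by
        rw [abs_taylorWeight]
        have := multichoose_nonneg (a := 1 + β * m) (by positivity) n
        gcongr
    _ = _ := by rw [mul_pow, pow_add]; ring

end TaylorWeight

section DiscreteMittagLeffler

variable {β x : ℝ}

/-- The `m`-th term of `discreteMittagLeffler β x k`. -/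
def discreteMittagLefflerTerm (β x : ℝ) (k m : ℕ) : ℝ⟦X⟧ :=
  C (taylorWeight k x m) * invOneSubRPow (1 + β * m)

/-- The power series `x ^ k * (1 - X) ^ (β - 1) / ((1 - X) ^ β + x) ^ (k + 1)`, expanded in powers
of `x`. Its `n`-th coefficient at `n ^ (-β) * x` tends to `x ^ k / k! * E_β⁽ᵏ⁾(-x)`. -/
def discreteMittagLeffler (β x : ℝ) (k : ℕ) : ℝ⟦X⟧ :=
  ∑' m, discreteMittagLefflerTerm β x k m

lemma coeff_discreteMittagLefflerTerm (n k m : ℕ) :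
    coeff n (discreteMittagLefflerTerm β x k m) =
      taylorWeight k x m * Ring.multichoose (1 + β * m) n := by
  rw [discreteMittagLefflerTerm, coeff_C_mul, coeff_invOneSubRPow]

lemma summable_discreteMittagLefflerTerm (hβ : 0 ≤ β) (hx : |x| < 1) (k : ℕ) :
    Summable (discreteMittagLefflerTerm β x k) := by
  refine (WithPiTopology.summable_iff_summable_coeff ℝ).2 fun n => ?_
  simp only [coeff_discreteMittagLefflerTerm]
  refine Summable.of_norm_bounded (summable_abs_taylorWeight_mul_multichoose hβ hx k n)
    fun m => le_of_eq ?_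
  rw [norm_mul, Real.norm_eq_abs, Real.norm_of_nonneg (multichoose_nonneg (by positivity) n)]

lemma coeff_discreteMittagLeffler (hβ : 0 ≤ β) (hx : |x| < 1) (k n : ℕ) :
    coeff n (discreteMittagLeffler β x k) =
      ∑' m : ℕ, taylorWeight k x m * Ring.multichoose (1 + β * m) n := by
  have h := (WithPiTopology.hasSum_iff_hasSum_coeff ℝ).1
    (summable_discreteMittagLefflerTerm hβ hx k).hasSum n
  simp only [coeff_discreteMittagLefflerTerm] at h
  exact h.tsum_eq.symm

lemma invOneSubRPow_neg_mul_discreteMittagLeffler (hβ : 0 ≤ β) (hx : |x| < 1) (k : ℕ) :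
    invOneSubRPow (-β) * discreteMittagLeffler β x k =
      C (taylorWeight k x 0) * invOneSubRPow (1 - β) +
        ∑' m : ℕ, C (taylorWeight k x (m + 1)) * invOneSubRPow (1 + β * m) := by
  have hs := summable_discreteMittagLefflerTerm hβ hx k
  rw [discreteMittagLeffler, ← hs.tsum_mul_left, (hs.mul_left _).tsum_eq_zero_add]
  congr 1
  · rw [discreteMittagLefflerTerm, mul_left_comm, ← invOneSubRPow_add]
    congr 2
    push_cast
    ring
  · refine tsum_congr fun m => ?_
    rw [discreteMittagLefflerTerm, mul_left_comm, ← invOneSubRPow_add]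
    congr 2
    push_cast
    ring

lemma invOneSubRPow_neg_add_C_mul_discreteMittagLeffler_zero (hβ : 0 ≤ β) (hx : |x| < 1) :
    (invOneSubRPow (-β) + C x) * discreteMittagLeffler β x 0 = invOneSubRPow (1 - β) := by
  have hs := summable_discreteMittagLefflerTerm hβ hx 0
  rw [add_mul, invOneSubRPow_neg_mul_discreteMittagLeffler hβ hx, discreteMittagLeffler,
    ← hs.tsum_mul_left]
  have hshift : ∑' m : ℕ, C (taylorWeight 0 x (m + 1)) * invOneSubRPow (1 + β * m) =
      -∑' m, C x * discreteMittagLefflerTerm β x 0 m := by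
    rw [← tsum_neg]
    refine tsum_congr fun m => ?_
    rw [discreteMittagLefflerTerm, taylorWeight_zero_succ, map_mul, map_neg]
    ring
  rw [hshift, neg_add_cancel_right]
  simp [taylorWeight]

lemma invOneSubRPow_neg_add_C_mul_discreteMittagLeffler_succ (hβ : 0 ≤ β) (hx : |x| < 1)
    (k : ℕ) :
    (invOneSubRPow (-β) + C x) * discreteMittagLeffler β x (k + 1) =
      C x * discreteMittagLeffler β x k := by
  have hs := summable_discreteMittagLefflerTerm hβ hx
  rw [add_mul, invOneSubRPow_neg_mul_discreteMittagLeffler hβ hx, discreteMittagLeffler,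
    discreteMittagLeffler]
  have hPascal : ∑' m : ℕ, C (taylorWeight (k + 1) x (m + 1)) * invOneSubRPow (1 + β * m) =
      C x * (∑' m, discreteMittagLefflerTerm β x k m -
        ∑' m, discreteMittagLefflerTerm β x (k + 1) m) := by
    rw [← (hs k).tsum_sub (hs (k + 1)), ← ((hs k).sub (hs (k + 1))).tsum_mul_left]
    refine tsum_congr fun m => ?_
    rw [discreteMittagLefflerTerm, discreteMittagLefflerTerm, taylorWeight_succ_succ, map_mul,
      map_sub]
    ring
  rw [hPascal]
  simp [taylorWeight, mul_sub]

lemma coeff_discreteMittagLeffler_nonneg (hβ0 : 0 ≤ β) (hβ1 : β ≤ 1) (hx0 : 0 ≤ x) (hx1 : x < 1)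
    (k n : ℕ) : 0 ≤ coeff n (discreteMittagLeffler β x k) := by
  have hx : |x| < 1 := by rwa [abs_of_nonneg hx0]
  have hA0 : 0 < coeff 0 (invOneSubRPow (-β) + C x) := by
    simp only [map_add, coeff_invOneSubRPow, Ring.multichoose_zero_right, coeff_zero_C]
    positivity
  have hA : ∀ n ≠ 0, coeff n (invOneSubRPow (-β) + C x) ≤ 0 := fun n hn => by
    rw [map_add, coeff_invOneSubRPow, coeff_C, if_neg hn, add_zero]
    exact multichoose_neg_nonpos hβ0 hβ1 hn
  induction k generalizing n with
  | zero =>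
    refine coeff_nonneg_of_mul hA0 hA (fun n => ?_) n
    rw [invOneSubRPow_neg_add_C_mul_discreteMittagLeffler_zero hβ0 hx, coeff_invOneSubRPow]
    exact multichoose_nonneg (by linarith) n
  | succ k ih =>
    refine coeff_nonneg_of_mul hA0 hA (fun n => ?_) n
    rw [invOneSubRPow_neg_add_C_mul_discreteMittagLeffler_succ hβ0 hx, coeff_C_mul]
    exact mul_nonneg hx0 (ih n)

end DiscreteMittagLeffler

section PollardLimit

variable {β : ℝ}

lemma tendsto_mul_natCast_rpow_neg (hβ : 0 < β) (x : ℝ) :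
    Tendsto (fun n : ℕ => x * (n : ℝ) ^ (-β)) atTop (𝓝 0) := by
  simpa using ((tendsto_rpow_neg_atTop hβ).comp tendsto_natCast_atTop_atTop).const_mul x

lemma exists_abs_mul_rpow_neg_lt_one (hβ : 0 < β) (x : ℝ) :
    ∃ N ≥ 1, ∀ n : ℕ, N ≤ n → |x * (n : ℝ) ^ (-β)| < 1 := by
  have hlt := (tendsto_mul_natCast_rpow_neg hβ x).abs.eventually_lt_const (by simp : |0| < (1 : ℝ))
  obtain ⟨N, hN⟩ := eventually_atTop.1 hlt
  exact ⟨max N 1, le_max_right _ _, fun n hn => hN n (le_of_max_le_left hn)⟩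

lemma taylorWeight_mul_rpow_neg (k : ℕ) (x : ℝ) (m n : ℕ) :
    taylorWeight k (x * (n : ℝ) ^ (-β)) m = taylorWeight k x m * (n : ℝ) ^ (-(β * m)) := by
  rw [taylorWeight_mul, ← Real.rpow_mul_natCast n.cast_nonneg, neg_mul]

lemma summable_abs_taylorWeight_mul_rpow_neg {x : ℝ} {n : ℕ} (hβ : 0 ≤ β)
    (hn : |x * (n : ℝ) ^ (-β)| < 1) (k : ℕ) :
    Summable fun m : ℕ =>
      |taylorWeight k x m| * (Ring.multichoose (1 + β * m) n * (n : ℝ) ^ (-(β * m))) := by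
  refine (summable_abs_taylorWeight_mul_multichoose hβ hn k n).congr fun m => ?_
  rw [taylorWeight_mul_rpow_neg, abs_mul, abs_of_nonneg (by positivity : 0 ≤ (n : ℝ) ^ (-(β * m)))]
  ring

lemma summable_abs_taylorWeight_mul_inv_Gamma (hβ : 0 < β) (k : ℕ) (x : ℝ) :
    Summable fun m : ℕ => |taylorWeight k x m| * (Real.Gamma (β * m + 1))⁻¹ := by
  obtain ⟨N, hN1, hN⟩ := exists_abs_mul_rpow_neg_lt_one hβ x
  refine Summable.of_nonneg_of_le (fun m => ?_) (fun m => ?_)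
    (summable_abs_taylorWeight_mul_rpow_neg hβ.le (hN N le_rfl) k)
  · have := Real.Gamma_pos_of_pos (s := β * m + 1) (by positivity)
    positivity
  · have := inv_Gamma_add_one_le (y := β * m) (by positivity) hN1
    gcongr

lemma tendsto_coeff_discreteMittagLeffler (hβ : 0 < β) (k : ℕ) (x : ℝ) :
    Tendsto (fun n : ℕ => coeff n (discreteMittagLeffler β (x * (n : ℝ) ^ (-β)) k)) atTop
      (𝓝 (∑' m : ℕ, taylorWeight k x m * (Real.Gamma (β * m + 1))⁻¹)) := by
  obtain ⟨N, hN1, hN⟩ := exists_abs_mul_rpow_neg_lt_one hβ x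
  have hlim := tendsto_tsum_of_dominated_convergence
    (f := fun (n m : ℕ) => taylorWeight k x m *
      (Ring.multichoose (1 + β * m) n * (n : ℝ) ^ (-(β * m))))
    (summable_abs_taylorWeight_mul_rpow_neg hβ.le (hN N le_rfl) k)
    (fun m => (tendsto_multichoose_mul_rpow (y := β * m) (by positivity)).const_mul _) (by
      filter_upwards [eventually_ge_atTop N] with n hn m
      have := multichoose_nonneg (a := 1 + β * m) (by positivity) n
      rw [norm_mul, Real.norm_eq_abs, Real.norm_of_nonneg (by positivity)]
      exact mul_le_mul_of_nonneg_left (antitoneOn_multichoose_mul_rpow (by positivity) hN1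
        (hN1.trans hn : 1 ≤ n) hn) (abs_nonneg _))
  refine hlim.congr' ?_
  filter_upwards [eventually_ge_atTop N] with n hn
  rw [coeff_discreteMittagLeffler hβ.le (hN n hn)]
  refine tsum_congr fun m => ?_
  rw [taylorWeight_mul_rpow_neg]
  ring

lemma tsum_taylorWeight_mul_inv_Gamma_nonneg (hβ0 : 0 < β) (hβ1 : β ≤ 1) {x : ℝ} (hx : 0 ≤ x)
    (k : ℕ) : 0 ≤ ∑' m : ℕ, taylorWeight k x m * (Real.Gamma (β * m + 1))⁻¹ := by
  refine ge_of_tendsto (tendsto_coeff_discreteMittagLeffler hβ0 k x) ?_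
  filter_upwards [(tendsto_mul_natCast_rpow_neg hβ0 x).eventually_lt_const one_pos] with n hn
  exact coeff_discreteMittagLeffler_nonneg hβ0.le hβ1 (by positivity) hn k n

end PollardLimit

section IteratedDeriv

lemma tendstoLocallyUniformlyOn_iteratedDeriv {ι : Type*} {φ : Filter ι} {F : ι → ℂ → ℂ}
    {f : ℂ → ℂ} {U : Set ℂ} (hU : IsOpen U) (hF : ∀ᶠ i in φ, DifferentiableOn ℂ (F i) U)
    (hf : TendstoLocallyUniformlyOn F f φ U) (k : ℕ) :
    TendstoLocallyUniformlyOn (fun i => iteratedDeriv k (F i)) (iteratedDeriv k f) φ U := by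
  induction k generalizing F f with
  | zero => simpa using hf
  | succ k ih =>
    simp only [iteratedDeriv_succ']
    exact ih (hF.mono fun i hi => hi.deriv hU) (hf.deriv hF hU)

lemma hasSum_iteratedDeriv_of_summable_norm {ι : Type*} {F : ι → ℂ → ℂ} {U : Set ℂ} {u : ι → ℝ}
    (hu : Summable u) (hU : IsOpen U) (hF : ∀ i, DifferentiableOn ℂ (F i) U)
    (hFu : ∀ i, ∀ w ∈ U, ‖F i w‖ ≤ u i) {z : ℂ} (hz : z ∈ U) (k : ℕ) :
    HasSum (fun i => iteratedDeriv k (F i) z) (iteratedDeriv k (fun w => ∑' i, F i w) z) := by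
  have hlim := tendstoLocallyUniformlyOn_iteratedDeriv hU
    (Eventually.of_forall fun s => DifferentiableOn.fun_sum fun i _ => hF i)
    (tendstoUniformlyOn_tsum hu hFu).tendstoLocallyUniformlyOn k
  refine (hlim.tendsto_at hz).congr fun s => ?_
  exact iteratedDeriv_fun_sum fun i _ => ((hF i).analyticAt (hU.mem_nhds hz)).contDiffAt

lemma iteratedDeriv_ofReal {F : ℂ → ℂ} {f : ℝ → ℝ} {s : Set ℝ} (hs : IsOpen s)
    (hF : ∀ x ∈ s, AnalyticAt ℂ F x) (hFf : ∀ x ∈ s, F x = f x) (n : ℕ) {x : ℝ} (hx : x ∈ s) :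
    iteratedDeriv n F x = (iteratedDeriv n f x : ℝ) := by
  induction n generalizing x with
  | zero => simpa using hFf x hx
  | succ n ih =>
    have hd : HasDerivAt (iteratedDeriv n F) (iteratedDeriv (n + 1) F x) x := by
      rw [iteratedDeriv_succ, iteratedDeriv_eq_iterate]
      exact ((hF x hx).iterated_deriv n).differentiableAt.hasDerivAt
    have hcast : HasDerivAt (fun t : ℝ => ((iteratedDeriv n f t : ℝ) : ℂ))
        (iteratedDeriv (n + 1) F x) x := by
      refine hd.comp_ofReal.congr_of_eventuallyEq ?_
      filter_upwards [hs.mem_nhds hx] with t ht using (ih ht).symm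
    have hreal : HasDerivAt (iteratedDeriv n f) (iteratedDeriv (n + 1) F x).re x := by
      refine hd.real_of_complex.congr_of_eventuallyEq ?_
      filter_upwards [hs.mem_nhds hx] with t ht
      rw [ih ht, Complex.ofReal_re]
    rw [iteratedDeriv_succ (f := f), hreal.deriv]
    exact hcast.unique hreal.ofReal_comp

end IteratedDeriv

section MittagLeffler

variable {β : ℝ}

lemma mittagLeffler_ofReal (β x : ℝ) : mittagLeffler β x = mittagLefflerR β x := by
  rw [mittagLeffler, mittagLefflerR, Complex.ofReal_tsum]
  simp only [Complex.Gamma_ofReal, Complex.ofReal_div, Complex.ofReal_pow]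

lemma mittagLeffler_zero (β : ℝ) : mittagLeffler β 0 = 1 := by
  rw [mittagLeffler, tsum_eq_single 0 fun m hm => by simp [hm]]
  simp

lemma norm_mittagLeffler_term_le (hβ : 0 ≤ β) {R : ℝ} {z : ℂ} (hz : ‖z‖ ≤ R) (m : ℕ) :
    ‖z ^ m / Complex.Gamma ((β * m + 1 : ℝ) : ℂ)‖ ≤
      |taylorWeight 0 R m| * (Real.Gamma (β * m + 1))⁻¹ := by
  have hΓ := Real.Gamma_pos_of_pos (s := β * m + 1) (by positivity)
  rw [norm_div, norm_pow, Complex.Gamma_ofReal, Complex.norm_real, Real.norm_of_nonneg hΓ.le,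
    abs_taylorWeight, Nat.choose_zero_right, Nat.cast_one, one_mul, div_eq_mul_inv]
  gcongr
  exact hz.trans (le_abs_self R)

lemma differentiable_mittagLeffler (hβ : 0 < β) : Differentiable ℂ (mittagLeffler β) := by
  intro z
  have hball : Metric.ball (0 : ℂ) (‖z‖ + 1) ∈ 𝓝 z := Metric.isOpen_ball.mem_nhds (by simp)
  refine DifferentiableOn.differentiableAt (s := Metric.ball 0 (‖z‖ + 1)) ?_ hball
  exact Complex.differentiableOn_tsum_of_summable_norm
    (summable_abs_taylorWeight_mul_inv_Gamma hβ 0 (‖z‖ + 1)) (fun m => by fun_prop)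
    Metric.isOpen_ball fun m w hw => norm_mittagLeffler_term_le hβ.le (mem_ball_zero_iff.1 hw).le m

lemma differentiable_mittagLeffler_const_mul (hβ : 0 < β) (c : ℂ) :
    Differentiable ℂ fun z => mittagLeffler β (c * z) :=
  (differentiable_mittagLeffler hβ).comp (differentiable_id.const_mul c)

lemma eventually_mittagLeffler_const_mul_ne_zero (hβ : 0 < β) (c : ℂ) :
    ∀ᶠ z in 𝓝 0, mittagLeffler β (c * z) ≠ 0 :=
  (differentiable_mittagLeffler_const_mul hβ c).continuous.continuousAt.eventually_ne
    (by simp [mittagLeffler_zero])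

lemma analyticAt_inv_mittagLeffler_const_mul (hβ : 0 < β) (c : ℂ) :
    AnalyticAt ℂ (fun z => (mittagLeffler β (c * z))⁻¹) 0 :=
  ((differentiable_mittagLeffler_const_mul hβ c).analyticAt 0).inv
    (eventually_mittagLeffler_const_mul_ne_zero hβ c).self_of_nhds

lemma hasSum_iteratedDeriv_mittagLeffler (hβ : 0 < β) (k : ℕ) (z : ℂ) :
    HasSum (fun m : ℕ => m.descFactorial k * z ^ (m - k) / Complex.Gamma ((β * m + 1 : ℝ) : ℂ))
      (iteratedDeriv k (mittagLeffler β) z) := by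
  have h := hasSum_iteratedDeriv_of_summable_norm
    (F := fun (m : ℕ) (z : ℂ) => z ^ m / Complex.Gamma ((β * m + 1 : ℝ) : ℂ))
    (summable_abs_taylorWeight_mul_inv_Gamma hβ 0 (‖z‖ + 1)) Metric.isOpen_ball
    (fun m => by fun_prop)
    (fun m w hw => norm_mittagLeffler_term_le hβ.le (mem_ball_zero_iff.1 hw).le m)
    (by simp : z ∈ Metric.ball 0 (‖z‖ + 1)) k
  simp only [iteratedDeriv_div_const, iteratedDeriv_pow] at h
  exact h

lemma iteratedDeriv_mittagLeffler_ofReal (hβ : 0 < β) (k : ℕ) (x : ℝ) :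
    iteratedDeriv k (mittagLeffler β) x = (iteratedDeriv k (mittagLefflerR β) x : ℝ) :=
  iteratedDeriv_ofReal isOpen_univ (fun x _ => (differentiable_mittagLeffler hβ).analyticAt x)
    (fun x _ => mittagLeffler_ofReal β x) k (Set.mem_univ x)

lemma taylorWeight_eq_descFactorial (k : ℕ) (x : ℝ) (m : ℕ) :
    taylorWeight k x m = x ^ k / k.factorial * (m.descFactorial k * (-x) ^ (m - k)) := by
  rw [taylorWeight, Nat.descFactorial_eq_factorial_mul_choose]
  rcases lt_or_ge m k with hmk | hkm
  · simp [Nat.choose_eq_zero_of_lt hmk]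
  · obtain ⟨j, rfl⟩ := Nat.exists_eq_add_of_le hkm
    have hk : (k.factorial : ℝ) ≠ 0 := by positivity
    have hsign : x ^ k = (-1) ^ k * (-x) ^ k := by rw [← mul_pow, neg_one_mul, neg_neg]
    rw [Nat.add_sub_cancel_left, hsign, pow_add]
    push_cast
    field_simp

lemma pow_div_factorial_mul_iteratedDeriv_mittagLefflerR (hβ : 0 < β) (k : ℕ) (x : ℝ) :
    x ^ k / k.factorial * iteratedDeriv k (mittagLefflerR β) (-x) =
      ∑' m : ℕ, taylorWeight k x m * (Real.Gamma (β * m + 1))⁻¹ := by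
  have h := hasSum_iteratedDeriv_mittagLeffler hβ k ((-x : ℝ) : ℂ)
  rw [iteratedDeriv_mittagLeffler_ofReal hβ] at h
  simp only [Complex.Gamma_ofReal] at h
  have hreal : HasSum (fun m : ℕ => m.descFactorial k * (-x) ^ (m - k) / Real.Gamma (β * m + 1))
      (iteratedDeriv k (mittagLefflerR β) (-x)) :=
    Complex.hasSum_ofReal.1 (by exact_mod_cast h)
  rw [← hreal.tsum_eq, ← tsum_mul_left]
  refine tsum_congr fun m => ?_
  rw [taylorWeight_eq_descFactorial]
  ring

lemma pow_div_factorial_mul_iteratedDeriv_mittagLefflerR_nonneg (hβ0 : 0 < β) (hβ1 : β ≤ 1)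
    {x : ℝ} (hx : 0 ≤ x) (k : ℕ) :
    0 ≤ x ^ k / k.factorial * iteratedDeriv k (mittagLefflerR β) (-x) := by
  rw [pow_div_factorial_mul_iteratedDeriv_mittagLefflerR hβ0]
  exact tsum_taylorWeight_mul_inv_Gamma_nonneg hβ0 hβ1 hx k

end MittagLeffler

section FracPoisson

variable {lam β : ℝ}

/-- The mass `π_{λ,β}({k})`. -/
def fracPoissonWeight (lam β : ℝ) (k : ℕ) : ℝ :=
  lam ^ k / k.factorial * iteratedDeriv k (mittagLefflerR β) (-lam)

lemma integral_fracPoisson (hlam : 0 ≤ lam) (hβ0 : 0 < β) (hβ1 : β ≤ 1) (f : ℝ → ℂ) :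
    ∫ x, f x ∂(fracPoisson lam β) = ∑' j : ℕ, (fracPoissonWeight lam β j : ℂ) * f j := by
  rw [fracPoisson, integral_sum_dirac fun _ => ENNReal.ofReal_ne_top]
  refine tsum_congr fun j => ?_
  rw [ENNReal.toReal_ofReal
    (pow_div_factorial_mul_iteratedDeriv_mittagLefflerR_nonneg hβ0 hβ1 hlam j),
    Complex.real_smul, fracPoissonWeight]

/-- The sum is the Taylor expansion of `E_β⁽ᵐ⁾` about `-λ`, evaluated at `0`. -/
lemma hasSum_fracPoissonWeight_mul_descFactorial (hβ : 0 < β) (lam : ℝ) (m : ℕ) :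
    HasSum (fun j : ℕ => (fracPoissonWeight lam β j : ℂ) * j.descFactorial m)
      (iteratedDeriv m (fun z : ℂ => mittagLeffler β (lam * z)) 0) := by
  have hE := differentiable_mittagLeffler hβ
  have hEm : Differentiable ℂ (iteratedDeriv m (mittagLeffler β)) :=
    (hE.contDiff (n := ⊤)).differentiable_iteratedDeriv m (by exact_mod_cast WithTop.coe_lt_top _)
  have hTaylor := (Complex.hasSum_taylorSeries_of_entire hEm (-lam : ℂ) 0).mul_left ((lam : ℂ) ^ m)
  simp only [iteratedDeriv_comp_const_mul hE.contDiff, mul_zero]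
  rw [← hasSum_nat_add_iff' m, sum_eq_zero fun j hj => by
    simp [Nat.descFactorial_of_lt (mem_range.1 hj)], sub_zero]
  refine hTaylor.congr_fun fun j => ?_
  have hdesc : (((j + m).descFactorial m : ℕ) : ℂ) = (j + m).factorial / j.factorial := by
    rw [eq_div_iff (by exact_mod_cast j.factorial_ne_zero), mul_comm]
    exact_mod_cast Nat.add_sub_cancel j m ▸ Nat.factorial_mul_descFactorial (Nat.le_add_left m j)
  have hderiv : iteratedDeriv j (iteratedDeriv m (mittagLeffler β)) (-lam : ℂ)
      = (iteratedDeriv (j + m) (mittagLefflerR β) (-lam) : ℝ) := by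
    rw [← iteratedDeriv_mittagLeffler_ofReal hβ, iteratedDeriv_eq_iterate,
      iteratedDeriv_eq_iterate, iteratedDeriv_eq_iterate, ← Function.iterate_add_apply,
      Complex.ofReal_neg]
  have hfac : ((j + m).factorial : ℂ) ≠ 0 := by exact_mod_cast (j + m).factorial_ne_zero
  rw [hderiv, hdesc, fracPoissonWeight, smul_eq_mul, smul_eq_mul]
  push_cast
  field_simp
  ring

end FracPoisson

section ExponentialFamily

variable {L g : ℂ → ℂ} {z₀ : ℂ}

lemma deriv_exp_const_mul_mul (hL : AnalyticAt ℂ L z₀) (hg : AnalyticAt ℂ g z₀) (t : ℂ) :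
    deriv (fun z => Complex.exp (t * L z) * g z) =ᶠ[𝓝 z₀] fun z =>
      t * (Complex.exp (t * L z) * (deriv L z * g z)) + Complex.exp (t * L z) * deriv g z := by
  filter_upwards [hL.eventually_analyticAt, hg.eventually_analyticAt] with z hLz hgz
  have hexp := (hLz.differentiableAt.hasDerivAt.const_mul t).cexp
  rw [(hexp.fun_mul hgz.differentiableAt.hasDerivAt).deriv]
  ring

lemma iteratedDeriv_succ_exp_const_mul_mul (hL : AnalyticAt ℂ L z₀) (hg : AnalyticAt ℂ g z₀)
    (n : ℕ) (t : ℂ) :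
    iteratedDeriv (n + 1) (fun z => Complex.exp (t * L z) * g z) z₀ =
      t * iteratedDeriv n (fun z => Complex.exp (t * L z) * (deriv L z * g z)) z₀ +
        iteratedDeriv n (fun z => Complex.exp (t * L z) * deriv g z) z₀ := by
  have hexp : AnalyticAt ℂ (fun z => Complex.exp (t * L z)) z₀ := (analyticAt_const.mul hL).cexp
  have hdL := hexp.fun_mul (hL.deriv.fun_mul hg)
  rw [iteratedDeriv_succ', (deriv_exp_const_mul_mul hL hg t).iteratedDeriv_eq,
    iteratedDeriv_fun_add (analyticAt_const.fun_mul hdL).contDiffAt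
      (hexp.fun_mul hg.deriv).contDiffAt, iteratedDeriv_const_mul_field]

lemma hasDerivAt_iteratedDeriv_exp_const_mul_mul (hL : AnalyticAt ℂ L z₀)
    (hg : AnalyticAt ℂ g z₀) (n : ℕ) (t : ℂ) :
    HasDerivAt (fun t : ℂ => iteratedDeriv n (fun z => Complex.exp (t * L z) * g z) z₀)
      (iteratedDeriv n (fun z => Complex.exp (t * L z) * (L z * g z)) z₀) t := by
  induction n generalizing g with
  | zero =>
    simp only [iteratedDeriv_zero]
    refine ((hasDerivAt_mul_const (L z₀)).cexp.mul_const (g z₀)).congr_deriv ?_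
    rw [mul_assoc]
  | succ n ih =>
    have hexp : AnalyticAt ℂ (fun z => Complex.exp (t * L z)) z₀ := (analyticAt_const.mul hL).cexp
    have hderiv : (fun z => Complex.exp (t * L z) * deriv (fun z => L z * g z) z) =ᶠ[𝓝 z₀]
        fun z => Complex.exp (t * L z) * (deriv L z * g z) +
          Complex.exp (t * L z) * (L z * deriv g z) := by
      filter_upwards [hL.eventually_analyticAt, hg.eventually_analyticAt] with z hLz hgz
      rw [deriv_fun_mul hLz.differentiableAt hgz.differentiableAt, mul_add]
    simp only [iteratedDeriv_succ_exp_const_mul_mul hL hg]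
    refine (((hasDerivAt_id t).fun_mul (ih (hL.deriv.fun_mul hg))).fun_add
      (ih hg.deriv)).congr_deriv ?_
    rw [iteratedDeriv_succ_exp_const_mul_mul hL (hL.fun_mul hg), hderiv.iteratedDeriv_eq,
      iteratedDeriv_fun_add (hexp.fun_mul (hL.deriv.fun_mul hg)).contDiffAt
        (hexp.fun_mul (hL.fun_mul hg.deriv)).contDiffAt]
    simp only [id, mul_left_comm (L _) (deriv L _)]
    ring

lemma iteratedDeriv_iteratedDeriv_exp_ofReal_mul_mul (hL : AnalyticAt ℂ L z₀)
    (hg : AnalyticAt ℂ g z₀) (n k : ℕ) :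
    iteratedDeriv k (fun t : ℝ => iteratedDeriv n (fun z => Complex.exp (t * L z) * g z) z₀) =
      fun t : ℝ => iteratedDeriv n (fun z => Complex.exp (t * L z) * (L z ^ k * g z)) z₀ := by
  induction k with
  | zero => simp only [iteratedDeriv_zero, pow_zero, one_mul]
  | succ k ih =>
    rw [iteratedDeriv_succ, ih]
    funext t
    have hderiv := hasDerivAt_iteratedDeriv_exp_const_mul_mul hL ((hL.fun_pow k).fun_mul hg) n t
    simpa only [pow_succ', mul_assoc] using hderiv.comp_ofReal.deriv

lemma iteratedDeriv_pow_eq_zero_of_lt (hL : AnalyticAt ℂ L z₀) (hL₀ : L z₀ = 0) {n k : ℕ}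
    (hnk : n < k) : iteratedDeriv n (fun z => L z ^ k) z₀ = 0 := by
  have hk : (k : ℕ∞) ≤ analyticOrderAt (L ^ k) z₀ := by
    rw [analyticOrderAt_pow hL, nsmul_eq_mul]
    exact le_mul_of_one_le_right' (Order.one_le_iff_pos.2 (pos_iff_ne_zero.2
      (hL.analyticOrderAt_ne_zero.2 hL₀)))
  exact (natCast_le_analyticOrderAt_iff_iteratedDeriv_eq_zero (hL.pow k)).1 hk n hnk

end ExponentialFamily

section LogOneAdd

lemma analyticAt_log_one_add {z : ℂ} (hz : 1 + z ∈ Complex.slitPlane) :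
    AnalyticAt ℂ (fun w => Complex.log (1 + w)) z :=
  (analyticAt_const.add analyticAt_id).clog hz

lemma iteratedDeriv_exp_natCast_mul_log_one_add (j i : ℕ) :
    iteratedDeriv i (fun z : ℂ => Complex.exp (j * Complex.log (1 + z))) 0 =
      j.descFactorial i := by
  have hpow : (fun z : ℂ => Complex.exp (j * Complex.log (1 + z))) =ᶠ[𝓝 0]
      fun z => (1 + z) ^ j := by
    have hne : ∀ᶠ z : ℂ in 𝓝 0, 1 + z ≠ 0 :=
      (by fun_prop : ContinuousAt (fun z : ℂ => 1 + z) 0).eventually_ne (by simp)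
    filter_upwards [hne] with z hz
    rw [Complex.exp_nat_mul, Complex.exp_log hz]
  rw [hpow.iteratedDeriv_eq, iteratedDeriv_comp_const_add i (fun z : ℂ => z ^ j)]
  simp only [iteratedDeriv_pow, add_zero, one_pow, mul_one]

lemma iteratedDeriv_log_one_add_pow (n k : ℕ) :
    iteratedDeriv n (fun z : ℂ => Complex.log (1 + z) ^ k) 0 = k.factorial * stirlingFst n k := by
  have hpos {x : ℝ} (hx : x ∈ Set.Ioi (-1)) : 0 < 1 + x := by linarith [Set.mem_Ioi.1 hx]
  have h := iteratedDeriv_ofReal (F := fun z : ℂ => Complex.log (1 + z) ^ k)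
    (f := fun x : ℝ => Real.log (1 + x) ^ k) isOpen_Ioi
    (fun x hx => (analyticAt_log_one_add (by
      exact_mod_cast Complex.ofReal_mem_slitPlane.2 (hpos hx))).fun_pow k)
    (fun x hx => by rw [Complex.ofReal_pow, Complex.ofReal_log (hpos hx).le]; push_cast; rfl)
    n (x := 0) (by simp)
  have hk : (k.factorial : ℂ) ≠ 0 := by exact_mod_cast k.factorial_ne_zero
  rw [Complex.ofReal_zero] at h
  rw [h, stirlingFst, Complex.ofReal_div, Complex.ofReal_natCast, mul_div_cancel₀ _ hk]

end LogOneAdd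

section GeneratingFunction

variable {lam β : ℝ} {h : ℂ → ℂ}

/-- The generating function identity `∫ exp (x log (1 + z)) dπ_{λ,β}(x) = E_β(λz)`, multiplied by
`h` and differentiated at `0` under the integral sign. -/
lemma integral_iteratedDeriv_exp_mul_log_one_add_mul (hlam : 0 ≤ lam) (hβ0 : 0 < β) (hβ1 : β ≤ 1)
    (hh : AnalyticAt ℂ h 0) (n : ℕ) :
    ∫ x : ℝ, iteratedDeriv n (fun z => Complex.exp (x * Complex.log (1 + z)) * h z) 0
        ∂(fracPoisson lam β) =
      iteratedDeriv n (fun z => mittagLeffler β (lam * z) * h z) 0 := by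
  have hlog := analyticAt_log_one_add (z := 0) (by simp)
  have hexp (x : ℂ) : AnalyticAt ℂ (fun z => Complex.exp (x * Complex.log (1 + z))) 0 :=
    (analyticAt_const.mul hlog).cexp
  have hE := (differentiable_mittagLeffler_const_mul hβ0 lam).analyticAt 0
  have hsum : HasSum (fun j : ℕ => ∑ i ∈ range (n + 1),
      n.choose i * (fracPoissonWeight lam β j * j.descFactorial i) * iteratedDeriv (n - i) h 0)
      (iteratedDeriv n (fun z => mittagLeffler β (lam * z) * h z) 0) := by
    rw [iteratedDeriv_fun_mul hE.contDiffAt hh.contDiffAt]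
    exact hasSum_sum fun i _ =>
      ((hasSum_fracPoissonWeight_mul_descFactorial hβ0 lam i).mul_left _).mul_right _
  rw [integral_fracPoisson hlam hβ0 hβ1, ← hsum.tsum_eq]
  refine tsum_congr fun j => ?_
  rw [iteratedDeriv_fun_mul (hexp _).contDiffAt hh.contDiffAt, mul_sum]
  refine sum_congr rfl fun i _ => ?_
  rw [Complex.ofReal_natCast, iteratedDeriv_exp_natCast_mul_log_one_add]
  ring

lemma iteratedDeriv_genAppell (hβ : 0 < β) (lam : ℝ) (n k : ℕ) :
    iteratedDeriv k (fun t : ℝ => genAppell lam β n t) = fun t : ℝ =>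
      iteratedDeriv n (fun z => Complex.exp (t * Complex.log (1 + z)) *
        (Complex.log (1 + z) ^ k * (mittagLeffler β (lam * z))⁻¹)) 0 := by
  simp only [genAppell, div_eq_mul_inv]
  exact iteratedDeriv_iteratedDeriv_exp_ofReal_mul_mul (analyticAt_log_one_add (by simp))
    (analyticAt_inv_mittagLeffler_const_mul hβ lam) n k

end GeneratingFunction

theorem stmt10 (lam β : ℝ) (hlam : 0 < lam) (hβ0 : 0 < β) (hβ1 : β ≤ 1) (n k : ℕ) :
    (∫ x : ℝ, iteratedDeriv k (fun t : ℝ => genAppell lam β n t) x ∂(fracPoisson lam β)) =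
      if k ≤ n then (k.factorial : ℂ) * ((stirlingFst n k : ℝ) : ℂ) else 0 := by
  have hlog := analyticAt_log_one_add (z := 0) (by simp)
  have hcancel : (fun z : ℂ => mittagLeffler β (lam * z) *
      (Complex.log (1 + z) ^ k * (mittagLeffler β (lam * z))⁻¹)) =ᶠ[𝓝 0]
      fun z => Complex.log (1 + z) ^ k := by
    filter_upwards [eventually_mittagLeffler_const_mul_ne_zero hβ0 lam] with z hz
    field_simp
  rw [iteratedDeriv_genAppell hβ0, integral_iteratedDeriv_exp_mul_log_one_add_mul hlam.le hβ0 hβ1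
    ((hlog.fun_pow k).fun_mul (analyticAt_inv_mittagLeffler_const_mul hβ0 lam)),
    hcancel.iteratedDeriv_eq]
  split_ifs with hkn
  · exact iteratedDeriv_log_one_add_pow n k
  · exact iteratedDeriv_pow_eq_zero_of_lt hlog (by simp) (not_le.1 hkn)
end
end

section
/- Let p, q ∈ ℕ₀ and set r = p + q + 1. For all sequences (Φ_n)_{n∈ℕ₀}, (Ψ_n)_{n∈ℕ₀} ⊂ ℂ, the Cauchy product Θ_n := ∑_{k=0}^n Φ_k Ψ_{n−k} satisfies ∑_{n=0}^∞ 2^{−nr} |Θ_n|² ≤ (∑_{n=0}^∞ 2^{−nq} |Φ_n|²) · (∑_{n=0}^∞ 2^{−np} |Ψ_n|²). (This is the continuity estimate ‖Φ ⋄ Ψ‖_{−r,−1} ≤ ‖Φ‖_{−q,−1} ‖Ψ‖_{−p,−1} for the Wick product on the generalized function space (N)^{−1}_{π_{λ,β}}.) -/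
open scoped ENNReal NNReal

/-!
By Cauchy–Schwarz, `‖∑_{i+j=n} Φ i * Ψ j‖² ≤ (n + 1) ∑_{i+j=n} ‖Φ i‖² ‖Ψ j‖²`. If the weights
satisfy `(i + j + 1) * w (i + j) ≤ u i * v j`, multiplying by `w n` and summing over `n` yields on
the right the antidiagonal rearrangement of `(∑ u i ‖Φ i‖²) (∑ v j ‖Ψ j‖²)`. For the weights
`2^{-nr}`, `2^{-nq}`, `2^{-np}` the condition holds once `r ≥ max p q + 1`: the spare factor `2⁻ⁿ`
absorbs `n + 1 ≤ 2ⁿ`.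
-/

open Finset

lemma enorm_sum_sq_le_card_mul_sum_sq {ι E : Type*} [SeminormedAddCommGroup E] (s : Finset ι)
    (f : ι → E) : ‖∑ i ∈ s, f i‖ₑ ^ 2 ≤ #s * ∑ i ∈ s, ‖f i‖ₑ ^ 2 := by
  have h : ‖∑ i ∈ s, f i‖₊ ^ 2 ≤ #s * ∑ i ∈ s, ‖f i‖₊ ^ 2 :=
    calc ‖∑ i ∈ s, f i‖₊ ^ 2 ≤ (∑ i ∈ s, ‖f i‖₊) ^ 2 := by gcongr; exact nnnorm_sum_le s f
      _ ≤ #s * ∑ i ∈ s, ‖f i‖₊ ^ 2 := sq_sum_le_card_mul_sum_sq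
  simp only [enorm_eq_nnnorm]
  exact_mod_cast h

lemma enorm_mul_le_mul_enorm {R : Type*} [NonUnitalSeminormedRing R] (x y : R) :
    ‖x * y‖ₑ ≤ ‖x‖ₑ * ‖y‖ₑ := by
  simp only [enorm_eq_nnnorm]
  exact_mod_cast nnnorm_mul_le x y

section Antidiagonal

variable {A : Type*} [AddMonoid A] [HasAntidiagonal A]

lemma ennreal_tsum_mul_tsum_eq_tsum_sum_antidiagonal (f g : A → ℝ≥0∞) :
    (∑' a, f a) * ∑' a, g a = ∑' a, ∑ x ∈ antidiagonal a, f x.1 * g x.2 :=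
  calc (∑' a, f a) * ∑' a, g a = ∑' x : A × A, f x.1 * g x.2 := by
        simp only [ENNReal.tsum_prod', ENNReal.tsum_mul_left, ENNReal.tsum_mul_right]
    _ = ∑' x : Σ a : A, antidiagonal a, f x.2.1.1 * g x.2.1.2 :=
        (HasAntidiagonal.sigmaAntidiagonalEquivProd.tsum_eq fun x : A × A ↦ f x.1 * g x.2).symm
    _ = ∑' a, ∑ x ∈ antidiagonal a, f x.1 * g x.2 := by
        rw [ENNReal.tsum_sigma']
        exact tsum_congr fun a ↦ Finset.tsum_subtype (antidiagonal a) fun x ↦ f x.1 * g x.2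

theorem tsum_mul_enorm_sum_antidiagonal_sq_le {R : Type*} [NonUnitalSeminormedRing R]
    {u v w : A → ℝ≥0∞} (hw : ∀ a b, w (a + b) * #(antidiagonal (a + b)) ≤ u a * v b)
    (Φ Ψ : A → R) :
    ∑' a, w a * ‖∑ x ∈ antidiagonal a, Φ x.1 * Ψ x.2‖ₑ ^ 2 ≤
      (∑' a, u a * ‖Φ a‖ₑ ^ 2) * ∑' a, v a * ‖Ψ a‖ₑ ^ 2 := by
  rw [ennreal_tsum_mul_tsum_eq_tsum_sum_antidiagonal]
  refine ENNReal.tsum_le_tsum fun a ↦ ?_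
  calc w a * ‖∑ x ∈ antidiagonal a, Φ x.1 * Ψ x.2‖ₑ ^ 2
      ≤ w a * (#(antidiagonal a) * ∑ x ∈ antidiagonal a, ‖Φ x.1 * Ψ x.2‖ₑ ^ 2) := by
        gcongr
        exact enorm_sum_sq_le_card_mul_sum_sq _ _
    _ = ∑ x ∈ antidiagonal a, w a * #(antidiagonal a) * ‖Φ x.1 * Ψ x.2‖ₑ ^ 2 := by
        rw [← mul_assoc, mul_sum]
    _ ≤ ∑ x ∈ antidiagonal a, u x.1 * v x.2 * (‖Φ x.1‖ₑ * ‖Ψ x.2‖ₑ) ^ 2 := by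
        refine sum_le_sum fun x hx ↦ ?_
        obtain rfl : x.1 + x.2 = a := mem_antidiagonal.mp hx
        exact mul_le_mul' (hw x.1 x.2) (pow_le_pow_left' (enorm_mul_le_mul_enorm _ _) 2)
    _ = ∑ x ∈ antidiagonal a, u x.1 * ‖Φ x.1‖ₑ ^ 2 * (v x.2 * ‖Ψ x.2‖ₑ ^ 2) := by
        simp only [mul_pow, mul_mul_mul_comm]

end Antidiagonal

lemma two_rpow_neg_mul_succ_le {p q r : ℝ} (hp : p + 1 ≤ r) (hq : q + 1 ≤ r) (i j : ℕ) :
    (2 : ℝ≥0∞) ^ (-((i + j : ℕ) * r)) * (i + j + 1 : ℕ) ≤ 2 ^ (-(i * q)) * 2 ^ (-(j * p)) := by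
  have hsucc : ((i + j + 1 : ℕ) : ℝ≥0∞) ≤ 2 ^ ((i + j : ℕ) : ℝ) := by
    rw [ENNReal.rpow_natCast]
    exact_mod_cast Nat.lt_two_pow_self
  have hexp : -((i + j : ℕ) * r) + (i + j : ℕ) ≤ -(i * q) + -(j * p) := by
    have hi : i * (q + 1) ≤ i * r := by gcongr
    have hj : j * (p + 1) ≤ j * r := by gcongr
    push_cast
    linarith
  calc (2 : ℝ≥0∞) ^ (-((i + j : ℕ) * r)) * (i + j + 1 : ℕ)
      ≤ 2 ^ (-((i + j : ℕ) * r)) * 2 ^ ((i + j : ℕ) : ℝ) := by gcongr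
    _ = 2 ^ (-((i + j : ℕ) * r) + (i + j : ℕ)) :=
        (ENNReal.rpow_add _ _ two_ne_zero ENNReal.ofNat_ne_top).symm
    _ ≤ 2 ^ (-(i * q) + -(j * p)) := ENNReal.rpow_le_rpow_of_exponent_le one_le_two hexp
    _ = 2 ^ (-(i * q)) * 2 ^ (-(j * p)) := ENNReal.rpow_add _ _ two_ne_zero ENNReal.ofNat_ne_top

theorem stmt13_general {R : Type*} [NonUnitalSeminormedRing R] {p q r : ℝ} (hp : p + 1 ≤ r)
    (hq : q + 1 ≤ r) (Φ Ψ : ℕ → R) :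
    ∑' n : ℕ, (2 : ℝ≥0∞) ^ (-(n * r)) * ‖∑ k ∈ range (n + 1), Φ k * Ψ (n - k)‖ₑ ^ 2 ≤
      (∑' n : ℕ, (2 : ℝ≥0∞) ^ (-(n * q)) * ‖Φ n‖ₑ ^ 2) *
        ∑' n : ℕ, (2 : ℝ≥0∞) ^ (-(n * p)) * ‖Ψ n‖ₑ ^ 2 := by
  simp only [← Nat.sum_antidiagonal_eq_sum_range_succ fun i j ↦ Φ i * Ψ j]
  refine tsum_mul_enorm_sum_antidiagonal_sq_le (fun i j ↦ ?_) Φ Ψ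
  rw [Nat.card_antidiagonal]
  exact two_rpow_neg_mul_succ_le hp hq i j

theorem stmt13 (p q : ℕ) (Φ Ψ : ℕ → ℂ) :
    (∑' n : ℕ, (2 : ℝ≥0∞) ^ (-(n * (p + q + 1) : ℤ)) *
        ((‖∑ k ∈ Finset.range (n + 1), Φ k * Ψ (n - k)‖₊ : ℝ≥0∞)) ^ 2) ≤
      (∑' n : ℕ, (2 : ℝ≥0∞) ^ (-(n * q : ℤ)) * ((‖Φ n‖₊ : ℝ≥0∞)) ^ 2) *
        (∑' n : ℕ, (2 : ℝ≥0∞) ^ (-(n * p : ℤ)) * ((‖Ψ n‖₊ : ℝ≥0∞)) ^ 2) := by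
  simpa [← ENNReal.rpow_intCast, enorm_eq_nnnorm] using
    stmt13_general (p := p) (q := q) (r := p + q + 1) (by simp) (by simp) Φ Ψ
end

section
/- Let κ ∈ [0,1], k = 2/(1+κ), and q ∈ ℕ₀. Let u : ℂ → ℂ be entire with Taylor expansion u(z) = ∑_{n=0}^∞ u_n z^n. Then for every z ∈ ℂ, |u(z)| ≤ (∑_{n=0}^∞ (n!)^{1+κ} 2^{nq} |u_n|²)^{1/2} · exp(2^{−kq/2} |z|^k). -/
/-! Put `p = 1 + κ` and choose `a` so that `a ^ p = 2 ^ (-q) * ‖z‖ ^ 2`, which is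
`a = 2 ^ (-(k * q) / 2) * ‖z‖ ^ k`. The Cauchy-Schwarz inequality with weights
`(n!) ^ p * 2 ^ (n * q)` bounds `‖u z‖` by the Hilbert norm times the square root of
`∑ (a ^ n / n!) ^ p`. As `p ≥ 1`, the `ℓᵖ` norm is at most the `ℓ¹` norm, so this last series is at
most `(∑ a ^ n / n!) ^ p = exp (p * a)`; finally `p / 2 ≤ 1`. -/

lemma sum_rpow_le_rpow_sum {ι : Type*} {p : ℝ} (hp : 1 ≤ p) {s : Finset ι} {f : ι → ℝ}
    (hf : ∀ i ∈ s, 0 ≤ f i) : ∑ i ∈ s, f i ^ p ≤ (∑ i ∈ s, f i) ^ p := by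
  classical
  induction s using Finset.induction_on with
  | empty => simp [Real.zero_rpow (zero_lt_one.trans_le hp).ne']
  | insert i s hi ih =>
    obtain ⟨hfi, hfs⟩ := (Finset.forall_mem_insert _ _ _).1 hf
    rw [Finset.sum_insert hi, Finset.sum_insert hi]
    calc f i ^ p + ∑ j ∈ s, f j ^ p
        ≤ f i ^ p + (∑ j ∈ s, f j) ^ p := by gcongr; exact ih hfs
      _ ≤ (f i + ∑ j ∈ s, f j) ^ p :=
        Real.add_rpow_le_rpow_add hfi (Finset.sum_nonneg hfs) hp

lemma sum_pow_div_factorial_le_exp {a : ℝ} (ha : 0 ≤ a) (s : Finset ℕ) :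
    ∑ n ∈ s, a ^ n / (n.factorial : ℝ) ≤ Real.exp a := by
  rw [Real.exp_eq_exp_ℝ]
  exact sum_le_hasSum s (fun n _ => by positivity) (NormedSpace.expSeries_div_hasSum_exp a)

lemma sum_pow_div_factorial_rpow_le_exp {p a : ℝ} (hp : 1 ≤ p) (ha : 0 ≤ a) (s : Finset ℕ) :
    ∑ n ∈ s, (a ^ n / (n.factorial : ℝ)) ^ p ≤ Real.exp (p * a) :=
  calc ∑ n ∈ s, (a ^ n / (n.factorial : ℝ)) ^ p
      ≤ (∑ n ∈ s, a ^ n / (n.factorial : ℝ)) ^ p :=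
        sum_rpow_le_rpow_sum hp fun n _ => by positivity
    _ ≤ Real.exp a ^ p := by
        gcongr
        exact sum_pow_div_factorial_le_exp ha s
    _ = Real.exp (p * a) := by rw [← Real.exp_mul, mul_comm]

lemma mul_pow_sq_eq_mul_div_factorial_rpow {p a r x : ℝ} (ha : 0 ≤ a) (hx : x ^ 2 = r * a ^ p)
    (b : ℝ) (n : ℕ) :
    (b * x ^ n) ^ 2 =
      (n.factorial : ℝ) ^ p * r ^ n * b ^ 2 * (a ^ n / (n.factorial : ℝ)) ^ p := by
  have hfac : (n.factorial : ℝ) ^ p ≠ 0 := by positivity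
  rw [Real.div_rpow (by positivity) (by positivity), ← Real.rpow_pow_comm ha, mul_pow,
    pow_right_comm, hx, mul_pow]
  field_simp

lemma sum_mul_pow_le_sqrt_mul_exp {p a r x : ℝ} (hp : 1 ≤ p) (ha : 0 ≤ a) (hr : 0 ≤ r)
    (hx : x ^ 2 = r * a ^ p) (b : ℕ → ℝ) (s : Finset ℕ) :
    ∑ n ∈ s, b n * x ^ n ≤
      √(∑ n ∈ s, (n.factorial : ℝ) ^ p * r ^ n * b n ^ 2) * Real.exp (p / 2 * a) := by
  set w : ℕ → ℝ := fun n => (n.factorial : ℝ) ^ p * r ^ n * b n ^ 2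
  set e : ℕ → ℝ := fun n => (a ^ n / (n.factorial : ℝ)) ^ p
  have hw : ∀ n, 0 ≤ w n := fun n => by positivity
  have he : ∀ n, 0 ≤ e n := fun n => by positivity
  have hterm (n : ℕ) : b n * x ^ n ≤ √(w n) * √(e n) := by
    rw [← Real.sqrt_mul (hw n)]
    exact Real.le_sqrt_of_sq_le (mul_pow_sq_eq_mul_div_factorial_rpow ha hx (b n) n).le
  calc ∑ n ∈ s, b n * x ^ n
      ≤ ∑ n ∈ s, √(w n) * √(e n) := Finset.sum_le_sum fun n _ => hterm n
    _ ≤ √(∑ n ∈ s, w n) * √(∑ n ∈ s, e n) := Real.sum_sqrt_mul_sqrt_le s hw he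
    _ ≤ √(∑ n ∈ s, w n) * √(Real.exp (p * a)) := by
        gcongr
        exact sum_pow_div_factorial_rpow_le_exp hp ha s
    _ = √(∑ n ∈ s, w n) * Real.exp (p / 2 * a) := by
        rw [← Real.exp_half, mul_div_right_comm]

lemma sq_eq_rpow_mul_rpow {p k r x : ℝ} (hkp : k * p = 2) (hr : 0 < r) (hx : 0 ≤ x) (q : ℝ) :
    x ^ 2 = r ^ q * (r ^ (-(k * q) / 2) * x ^ k) ^ p := by
  have hexp : -(k * q) / 2 * p = -q := by linear_combination (-q / 2) * hkp
  rw [Real.mul_rpow (by positivity) (by positivity), ← Real.rpow_mul hr.le, ← Real.rpow_mul hx,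
    hexp, hkp, Real.rpow_two, ← mul_assoc, ← Real.rpow_add hr, add_neg_cancel, Real.rpow_zero,
    one_mul]

section PowerSeries

variable {A E : Type*} [SeminormedRing A] [NormOneClass A] [SeminormedAddCommGroup E] [Module A E]
  [IsBoundedSMul A E]

lemma norm_le_sqrt_tsum_mul_exp {p a r : ℝ} (hp : 1 ≤ p) (ha : 0 ≤ a) (hr : 0 ≤ r)
    {c : ℕ → E} {z : A} {v : E} (hz : ‖z‖ ^ 2 = r * a ^ p) (hv : HasSum (fun n => z ^ n • c n) v)
    (hsum : Summable fun n : ℕ => (n.factorial : ℝ) ^ p * r ^ n * ‖c n‖ ^ 2) :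
    ‖v‖ ≤ √(∑' n : ℕ, (n.factorial : ℝ) ^ p * r ^ n * ‖c n‖ ^ 2) * Real.exp (p / 2 * a) := by
  refine le_of_tendsto hv.norm (Filter.Eventually.of_forall fun s => ?_)
  have hterm (n : ℕ) : ‖z ^ n • c n‖ ≤ ‖c n‖ * ‖z‖ ^ n :=
    calc ‖z ^ n • c n‖ ≤ ‖z ^ n‖ * ‖c n‖ := norm_smul_le _ _
      _ ≤ ‖z‖ ^ n * ‖c n‖ := by gcongr; exact norm_pow_le z n
      _ = ‖c n‖ * ‖z‖ ^ n := mul_comm _ _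
  calc ‖∑ n ∈ s, z ^ n • c n‖
      ≤ ∑ n ∈ s, ‖c n‖ * ‖z‖ ^ n := norm_sum_le_of_le s fun n _ => hterm n
    _ ≤ √(∑ n ∈ s, (n.factorial : ℝ) ^ p * r ^ n * ‖c n‖ ^ 2) * Real.exp (p / 2 * a) :=
        sum_mul_pow_le_sqrt_mul_exp hp ha hr hz _ s
    _ ≤ √(∑' n : ℕ, (n.factorial : ℝ) ^ p * r ^ n * ‖c n‖ ^ 2) * Real.exp (p / 2 * a) := by
        gcongr
        exact hsum.sum_le_tsum s fun n _ => by positivity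

theorem stmt14_general {κ k : ℝ} (hκ : 0 ≤ κ) (hk : k = 2 / (1 + κ)) (q : ℝ) {c : ℕ → E} {z : A}
    {v : E} (hv : HasSum (fun n => z ^ n • c n) v)
    (hsum : Summable fun n : ℕ =>
      (n.factorial : ℝ) ^ (1 + κ) * (2 : ℝ) ^ (n * q) * ‖c n‖ ^ 2) :
    ‖v‖ ≤ √(∑' n : ℕ, (n.factorial : ℝ) ^ (1 + κ) * (2 : ℝ) ^ (n * q) * ‖c n‖ ^ 2) *
      Real.exp ((1 + κ) / 2 * ((2 : ℝ) ^ (-(k * q) / 2) * ‖z‖ ^ k)) := by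
  have hkp : k * (1 + κ) = 2 := by rw [hk, div_mul_cancel₀ _ (by positivity)]
  have hpow (n : ℕ) : (2 : ℝ) ^ (n * q) = ((2 : ℝ) ^ q) ^ n := by
    rw [mul_comm, Real.rpow_mul_natCast zero_le_two]
  simp only [hpow] at hsum ⊢
  exact norm_le_sqrt_tsum_mul_exp (le_add_of_nonneg_right hκ) (by positivity) (by positivity)
    (sq_eq_rpow_mul_rpow hkp zero_lt_two (norm_nonneg z) q) hv hsum

end PowerSeries

theorem stmt14 (κ : ℝ) (hκ0 : 0 ≤ κ) (hκ1 : κ ≤ 1) (k : ℝ) (hk : k = 2 / (1 + κ))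
    (q : ℕ) (u : ℂ → ℂ) (hu : Differentiable ℂ u) (c : ℕ → ℂ)
    (hc : ∀ z : ℂ, HasSum (fun n : ℕ => c n * z ^ n) (u z))
    (hsum : Summable fun n : ℕ =>
      (n.factorial : ℝ) ^ ((1 : ℝ) + κ) * 2 ^ (n * q) * ‖c n‖ ^ 2) :
    ∀ z : ℂ, ‖u z‖ ≤
      Real.sqrt (∑' n : ℕ, (n.factorial : ℝ) ^ ((1 : ℝ) + κ) * 2 ^ (n * q) * ‖c n‖ ^ 2) *
        Real.exp ((2 : ℝ) ^ (-(k * q) / 2) * ‖z‖ ^ k) := by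
  intro z
  have hv : HasSum (fun n => z ^ n • c n) (u z) := by simpa only [smul_eq_mul, mul_comm] using hc z
  have hbound := stmt14_general hκ0 hk q hv (by exact_mod_cast hsum)
  have hκ : (1 + κ) / 2 ≤ 1 := by linarith
  exact_mod_cast hbound.trans <| mul_le_mul_of_nonneg_left
    (Real.exp_le_exp.2 <| mul_le_of_le_one_left (by positivity) hκ) (Real.sqrt_nonneg _)
end

section
/- Let κ ∈ [0,1], k = 2/(1+κ), l, q ∈ ℕ₀ with 2^q (k · 2^{−l})^{1+κ} < 1, and let M ≥ 0. Let u : ℂ → ℂ be entire with Taylor expansion u(z) = ∑_{n=0}^∞ u_n z^n, and suppose |u(z)| ≤ M exp(2^{−l} |z|^k) for all z ∈ ℂ. Then ∑_{n=0}^∞ (n!)^{1+κ} 2^{nq} |u_n|² ≤ M² (e√(2π))^{1+κ} ∑_{n=0}^∞ (n+1)² (2^q (k · 2^{−l})^{1+κ})^n < ∞. -/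
/-!
On the circle of radius `R`, Cauchy's estimate gives `‖a n‖ ≤ M * exp (σ * R ^ ρ) / R ^ n`, and the
right-hand side is minimal for `R ^ ρ = n / (ρ * σ)`, where it equals
`M * (e * ρ * σ / n) ^ (n / ρ)`. Squaring turns this into
`M ^ 2 * ((e / n) ^ n * (ρ * σ) ^ n) ^ (2 / ρ)`. Since `2 / ρ = 1 + κ` is also the exponent of `n!`,
Stirling's bound `n! * (e / n) ^ n ≤ e * √(n + 1)` leaves a geometric series of ratio
`2 ^ q * (ρ * σ) ^ (1 + κ)` with a weight of polynomial growth.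
-/

open Real Filter Metric

lemma factorial_mul_exp_div_pow_le (n : ℕ) :
    (n.factorial : ℝ) * (exp 1 / n) ^ n ≤ exp 1 * √(n + 1) := by
  rcases n with _ | n
  · simp
  have hanti : Stirling.stirlingSeq (n + 1) ≤ exp 1 / √2 := by
    simpa using Stirling.stirlingSeq'_antitone n.zero_le
  calc ((n + 1).factorial : ℝ) * (exp 1 / (n + 1 : ℕ)) ^ (n + 1)
      = Stirling.stirlingSeq (n + 1) * √(2 * (n + 1 : ℕ)) := by
        rw [Stirling.stirlingSeq, div_pow, div_pow]
        field_simp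
    _ ≤ exp 1 / √2 * √(2 * (n + 1 : ℕ)) := by gcongr
    _ = exp 1 * √(n + 1 : ℕ) := by
        rw [sqrt_mul zero_le_two]
        field_simp
    _ ≤ exp 1 * √((n + 1 : ℕ) + 1) := by
        gcongr
        linarith

lemma exp_mul_rpow_div_pow_eq {ρ σ R : ℝ} (hρ : 0 < ρ) (hσ : 0 < σ) (hR : 0 < R) {n : ℕ}
    (hn : n ≠ 0) (hRρ : R ^ ρ = n / (ρ * σ)) :
    exp (σ * R ^ ρ) / R ^ n = (exp 1 * ρ * σ / n) ^ (n / ρ) := by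
  have hexp : exp (σ * R ^ ρ) = exp 1 ^ (n / ρ) := by
    rw [exp_one_rpow, hRρ]
    congr 1
    field_simp
  have hpow : R ^ n = (n / (ρ * σ)) ^ (n / ρ) := by
    rw [← hRρ, ← rpow_mul hR.le, mul_div_cancel₀ _ hρ.ne', rpow_natCast]
  rw [hexp, hpow, ← div_rpow (by positivity) (by positivity)]
  congr 1
  field_simp

lemma summable_add_one_rpow_mul_geometric (p : ℝ) {x : ℝ} (hx : |x| < 1) :
    Summable fun n : ℕ ↦ (n + 1 : ℝ) ^ p * x ^ n := by
  refine .of_norm (summable_norm_mul_geometric_of_norm_lt_one' (k := ⌈p⌉₊) hx ?_)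
  refine .of_bound (2 ^ ⌈p⌉₊) ?_
  filter_upwards [eventually_ge_atTop 1] with n hn
  have hn_one : (1 : ℝ) ≤ n := by exact_mod_cast hn
  rw [norm_of_nonneg (by positivity), norm_of_nonneg (by positivity)]
  calc (n + 1 : ℝ) ^ p ≤ (n + 1) ^ (⌈p⌉₊ : ℝ) :=
        rpow_le_rpow_of_exponent_le (by linarith) (Nat.le_ceil p)
    _ = (n + 1) ^ ⌈p⌉₊ := rpow_natCast _ _
    _ ≤ (2 * n) ^ ⌈p⌉₊ := by
        gcongr
        linarith
    _ = 2 ^ ⌈p⌉₊ * (n ^ ⌈p⌉₊ : ℕ) := by rw [mul_pow, Nat.cast_pow]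

lemma monotone_tsum_add_one_rpow_mul_geometric {x : ℝ} (hx0 : 0 ≤ x) (hx1 : x < 1) :
    Monotone fun p : ℝ ↦ ∑' n : ℕ, (n + 1 : ℝ) ^ p * x ^ n := by
  intro p q hpq
  have hx : |x| < 1 := by rwa [abs_of_nonneg hx0]
  refine (summable_add_one_rpow_mul_geometric p hx).tsum_le_tsum (fun n ↦ ?_)
    (summable_add_one_rpow_mul_geometric q hx)
  gcongr
  linarith [n.cast_nonneg (α := ℝ)]

lemma exp_one_rpow_mul_tsum_le {s x : ℝ} (hs0 : 0 ≤ s) (hs4 : s ≤ 4) (hx0 : 0 ≤ x) (hx1 : x < 1) :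
    exp 1 ^ s * ∑' n : ℕ, (n + 1 : ℝ) ^ (s / 2) * x ^ n ≤
      (exp 1 * √(2 * π)) ^ s * ∑' n : ℕ, (n + 1 : ℝ) ^ 2 * x ^ n := by
  have hconst : exp 1 ≤ exp 1 * √(2 * π) :=
    le_mul_of_one_le_right (exp_pos 1).le (one_le_sqrt.2 (by linarith [pi_gt_three]))
  have htsum : ∑' n : ℕ, (n + 1 : ℝ) ^ (s / 2) * x ^ n ≤ ∑' n : ℕ, (n + 1 : ℝ) ^ 2 * x ^ n := by
    simpa only [rpow_two] using
      monotone_tsum_add_one_rpow_mul_geometric hx0 hx1 (show s / 2 ≤ 2 by linarith)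
  gcongr

lemma hasFPowerSeriesOnBall_top_of_forall_hasSum {𝕜 E : Type*} [NontriviallyNormedField 𝕜]
    [NormedAddCommGroup E] [NormedSpace 𝕜 E] {f : 𝕜 → E} {a : ℕ → E}
    (ha : ∀ z : 𝕜, HasSum (fun n ↦ z ^ n • a n) (f z)) :
    HasFPowerSeriesOnBall f (fun n ↦ ContinuousMultilinearMap.mkPiRing 𝕜 (Fin n) (a n)) 0 ⊤ where
  r_le := by
    refine ENNReal.le_of_forall_nnreal_lt fun r _ ↦ ?_
    obtain ⟨z, hz⟩ := NormedField.exists_lt_norm 𝕜 r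
    have hradius := FormalMultilinearSeries.le_radius_of_tendsto (r := ‖z‖₊)
      (fun n ↦ ContinuousMultilinearMap.mkPiRing 𝕜 (Fin n) (a n))
      (by simpa [norm_smul, mul_comm] using (ha z).summable.tendsto_atTop_zero.norm)
    exact (ENNReal.coe_le_coe.2 hz.le).trans hradius
  r_pos := ENNReal.zero_lt_top
  hasSum {z} _ := by simpa using ha z

section EntireFunctions

variable {E : Type*} [NormedAddCommGroup E] [NormedSpace ℂ E] [CompleteSpace E]

lemma norm_coeff_le_of_hasFPowerSeriesAt {f : ℂ → E} {p : FormalMultilinearSeries ℂ ℂ E}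
    {c : ℂ} {R C : ℝ} (hp : HasFPowerSeriesAt f p c) (hR : 0 < R)
    (hf : DiffContOnCl ℂ f (ball c R)) (hC : ∀ z ∈ sphere c R, ‖f z‖ ≤ C) (n : ℕ) :
    ‖p.coeff n‖ ≤ C / R ^ n := by
  obtain ⟨r, hp⟩ := hp
  have hcoeff : (n.factorial : ℂ) • p.coeff n = iteratedDeriv n f c := by
    rw [Nat.cast_smul_eq_nsmul]
    exact hp.factorial_smul 1 n
  have hderiv := Complex.norm_iteratedDeriv_le_of_forall_mem_sphere_norm_le n hR hf hC
  rw [← hcoeff, norm_smul, Complex.norm_natCast, mul_div_assoc] at hderiv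
  exact le_of_mul_le_mul_left hderiv (by positivity)

lemma norm_coeff_le_of_forall_hasSum {f : ℂ → E} {a : ℕ → E}
    (ha : ∀ z : ℂ, HasSum (fun n ↦ z ^ n • a n) (f z)) {R C : ℝ} (hR : 0 < R)
    (hC : ∀ z ∈ sphere (0 : ℂ) R, ‖f z‖ ≤ C) (n : ℕ) : ‖a n‖ ≤ C / R ^ n := by
  have hp := hasFPowerSeriesOnBall_top_of_forall_hasSum ha
  have hf : Differentiable ℂ f := fun z ↦ hp.differentiableOn.differentiableAt (by simp)
  simpa [FormalMultilinearSeries.coeff] using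
    norm_coeff_le_of_hasFPowerSeriesAt hp.hasFPowerSeriesAt hR hf.diffContOnCl hC n

/- For `n = 0` the base is `0` by the convention `x / 0 = 0` but the exponent vanishes too, so the
bound reads `‖a 0‖ ≤ M`. -/
lemma norm_coeff_le_of_norm_le_mul_exp {ρ σ M : ℝ} (hρ : 0 < ρ) (hσ : 0 < σ)
    {f : ℂ → E} {a : ℕ → E} (ha : ∀ z : ℂ, HasSum (fun n ↦ z ^ n • a n) (f z))
    (hf : ∀ z : ℂ, ‖f z‖ ≤ M * exp (σ * ‖z‖ ^ ρ)) (n : ℕ) :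
    ‖a n‖ ≤ M * (exp 1 * ρ * σ / n) ^ (n / ρ) := by
  rcases eq_or_ne n 0 with rfl | hn
  · have hf0 : f 0 = a 0 := by
      simpa using (ha 0).unique (hasSum_single 0 fun n hn ↦ by simp [hn])
    simpa [hf0, hρ.ne'] using hf 0
  · set R : ℝ := (n / (ρ * σ)) ^ ρ⁻¹
    have hR : 0 < R := by positivity
    have hRρ : R ^ ρ = n / (ρ * σ) := rpow_inv_rpow (by positivity) hρ.ne'
    calc ‖a n‖ ≤ M * exp (σ * R ^ ρ) / R ^ n :=
          norm_coeff_le_of_forall_hasSum ha hR (fun z hz ↦ mem_sphere_zero_iff_norm.1 hz ▸ hf z) n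
      _ = M * (exp 1 * ρ * σ / n) ^ (n / ρ) := by
          rw [mul_div_assoc, exp_mul_rpow_div_pow_eq hρ hσ hR hn hRρ]

lemma factorial_rpow_mul_sq_norm_coeff_le {ρ σ M : ℝ} (hρ : 0 < ρ) (hσ : 0 < σ)
    {f : ℂ → E} {a : ℕ → E} (ha : ∀ z : ℂ, HasSum (fun n ↦ z ^ n • a n) (f z))
    (hf : ∀ z : ℂ, ‖f z‖ ≤ M * exp (σ * ‖z‖ ^ ρ)) (n : ℕ) :
    (n.factorial : ℝ) ^ (2 / ρ) * ‖a n‖ ^ 2 ≤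
      M ^ 2 * exp 1 ^ (2 / ρ) * ((n + 1 : ℝ) ^ (1 / ρ) * ((ρ * σ) ^ (2 / ρ)) ^ n) := by
  have hsq : ((exp 1 * ρ * σ / n) ^ (n / ρ)) ^ 2 = ((exp 1 / n) ^ n * (ρ * σ) ^ n) ^ (2 / ρ) := by
    rw [← mul_pow, ← rpow_mul_natCast (by positivity), ← rpow_natCast_mul (by positivity)]
    congr 1 <;> push_cast <;> ring
  have hsqrt : (√(n + 1) : ℝ) ^ (2 / ρ) = (n + 1) ^ (1 / ρ) := by
    rw [sqrt_eq_rpow, ← rpow_mul (by positivity)]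
    congr 1
    ring
  calc (n.factorial : ℝ) ^ (2 / ρ) * ‖a n‖ ^ 2
      ≤ n.factorial ^ (2 / ρ) * (M * (exp 1 * ρ * σ / n) ^ (n / ρ)) ^ 2 := by
        gcongr
        exact norm_coeff_le_of_norm_le_mul_exp hρ hσ ha hf n
    _ = M ^ 2 * (n.factorial * (exp 1 / n) ^ n * (ρ * σ) ^ n) ^ (2 / ρ) := by
        rw [mul_pow, hsq, mul_assoc (n.factorial : ℝ), mul_rpow (x := n.factorial) (by positivity)
          (by positivity)]
        ring
    _ ≤ M ^ 2 * (exp 1 * √(n + 1) * (ρ * σ) ^ n) ^ (2 / ρ) := by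
        gcongr M ^ 2 * (?_ * _) ^ _
        exact factorial_mul_exp_div_pow_le n
    _ = M ^ 2 * exp 1 ^ (2 / ρ) * ((n + 1) ^ (1 / ρ) * ((ρ * σ) ^ (2 / ρ)) ^ n) := by
        rw [mul_rpow (by positivity) (by positivity), mul_rpow (by positivity) (by positivity),
          hsqrt, rpow_pow_comm (by positivity)]
        ring

end EntireFunctions

theorem stmt15_general {E : Type*} [NormedAddCommGroup E] [NormedSpace ℂ E] [CompleteSpace E]
    {κ k σ b M : ℝ} (hκ : -1 < κ) (hk : k = 2 / (1 + κ)) (hσ : 0 < σ) (hb : 0 ≤ b)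
    (hx : b * (k * σ) ^ (1 + κ) < 1) {f : ℂ → E} {a : ℕ → E}
    (ha : ∀ z : ℂ, HasSum (fun n ↦ z ^ n • a n) (f z))
    (hf : ∀ z : ℂ, ‖f z‖ ≤ M * exp (σ * ‖z‖ ^ k)) :
    Summable (fun n : ℕ ↦ (n.factorial : ℝ) ^ (1 + κ) * b ^ n * ‖a n‖ ^ 2) ∧
    ∑' n : ℕ, (n.factorial : ℝ) ^ (1 + κ) * b ^ n * ‖a n‖ ^ 2 ≤
      M ^ 2 * (exp 1 ^ (1 + κ) *
        ∑' n : ℕ, (n + 1 : ℝ) ^ ((1 + κ) / 2) * (b * (k * σ) ^ (1 + κ)) ^ n) := by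
  have hκ_pos : 0 < 1 + κ := by linarith
  have hk_pos : 0 < k := hk ▸ by positivity
  have hexponent : 2 / k = 1 + κ := by rw [hk, div_div_cancel₀ two_ne_zero]
  have hexponent_half : 1 / k = (1 + κ) / 2 := by rw [hk, one_div_div]
  set x : ℝ := b * (k * σ) ^ (1 + κ) with hx_def
  have hx_abs : |x| < 1 := by rwa [abs_of_nonneg (by positivity)]
  have hterm (n : ℕ) : (n.factorial : ℝ) ^ (1 + κ) * b ^ n * ‖a n‖ ^ 2 ≤
      M ^ 2 * exp 1 ^ (1 + κ) * ((n + 1) ^ ((1 + κ) / 2) * x ^ n) := by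
    have hcoeff := factorial_rpow_mul_sq_norm_coeff_le hk_pos hσ ha hf n
    rw [hexponent, hexponent_half] at hcoeff
    rw [hx_def]
    linear_combination b ^ n * hcoeff
  have hmajorant := (summable_add_one_rpow_mul_geometric ((1 + κ) / 2) hx_abs).mul_left
    (M ^ 2 * exp 1 ^ (1 + κ))
  have hsummable := Summable.of_nonneg_of_le (fun n ↦ by positivity) hterm hmajorant
  refine ⟨hsummable, ?_⟩
  rw [← mul_assoc, ← tsum_mul_left]
  exact hsummable.tsum_le_tsum hterm hmajorant

theorem stmt15 (κ k : ℝ) (hκ0 : 0 ≤ κ) (hκ1 : κ ≤ 1) (hk : k = 2 / (1 + κ))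
    (l q : ℕ)
    (hx : (2 : ℝ) ^ q * (k * (2 : ℝ) ^ (-(l : ℤ))) ^ ((1 : ℝ) + κ) < 1)
    (M : ℝ) (hM : 0 ≤ M)
    (u : ℂ → ℂ) (hu : Differentiable ℂ u) (c : ℕ → ℂ)
    (hc : ∀ z : ℂ, HasSum (fun n : ℕ => c n * z ^ n) (u z))
    (hb : ∀ z : ℂ, ‖u z‖ ≤ M * Real.exp ((2 : ℝ) ^ (-(l : ℤ)) * ‖z‖ ^ k)) :
    Summable (fun n : ℕ =>
      (n.factorial : ℝ) ^ ((1 : ℝ) + κ) * 2 ^ (n * q) * ‖c n‖ ^ 2) ∧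
    (∑' n : ℕ, (n.factorial : ℝ) ^ ((1 : ℝ) + κ) * 2 ^ (n * q) * ‖c n‖ ^ 2) ≤
      M ^ 2 * (Real.exp 1 * Real.sqrt (2 * Real.pi)) ^ ((1 : ℝ) + κ) *
        ∑' n : ℕ, ((n : ℝ) + 1) ^ 2 *
          ((2 : ℝ) ^ q * (k * (2 : ℝ) ^ (-(l : ℤ))) ^ ((1 : ℝ) + κ)) ^ n := by
  obtain ⟨hsummable, hle⟩ := stmt15_general (by linarith) hk (by positivity) (by positivity) hx
    (fun z ↦ by simpa only [smul_eq_mul, mul_comm] using hc z) hb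
  have hmajorant := exp_one_rpow_mul_tsum_le (s := 1 + κ) (by linarith) (by linarith)
    (by subst hk; positivity) hx
  simp only [pow_mul', mul_assoc (M ^ 2)]
  exact ⟨hsummable, hle.trans (by gcongr)⟩
end
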